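/- Let 𝕜 be a finite field of characteristic p and n ≥ 2, with 𝕜 ≠ F_2 if n = 2. If φ : M₀(𝕜) → M₀(𝕜) is a homomorphism of F_p[SL_n(𝕜)]-modules, then there exists λ ∈ 𝕜 such that φ(A) = λA for all A ∈ M₀(𝕜). -/

import Mathlib

/-!
The map `φ` commutes with conjugation by transvections, and that together with additivity is all
that is needed. For `i ≠ j`, the image of `x E_ij` commutes with every `E_kj` (`k ≠ j`) and every
`E_il` (`l ≠ i`), because the corresponding transvections fix `x E_ij`. This forces
`φ (x E_ij) = f_ij(x) · 1 + c_ij(x) · E_ij` (`map_single_eq`).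

Conjugating `x E_ij` by `1 + s E_ji` yields a formula for `φ (s x (E_ii - E_jj))`
(`map_diagPair`), from which `c_ij = c_ji` and comparisons between `c_ij (s x)`, `s c_ij(x)` and
the values of `f_ji` follow. If `n ≥ 3`, conjugating `x E_ij` by `1 + s E_jk` shows that `f`
vanishes and that `c_ik (s x) = s c_ij(x)`. If `n = 2` and `p` is odd, `f` vanishes because
`φ (x E_ij)` has trace zero. If `n = 2` and `p = 2`, then `c_ji (s² x) = s² c_ij(x)` gives
linearity since every element is a square, after which `f_ij (s x) = f_ij (x)` for `s ≠ 0`; taking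
`s ≠ 0, 1`, possible as `𝕜 ≠ 𝔽₂`, shows that `f` vanishes.

Hence `φ` is multiplication by one scalar on all `x E_ij` and all `x (E_ii - E_jj)`, and these
generate the trace-zero matrices additively.
-/

section

variable (p n : ℕ) [Fact p.Prime] (𝕜 : Type) [Field 𝕜] [Fintype 𝕜] [CharP 𝕜 p]

/-- The `𝔽_p`-module structure on `𝕜` (characteristic `p`). -/
noncomputable local instance : Algebra (ZMod p) 𝕜 := ZMod.algebra 𝕜 p

/-- `M₀(𝕜)`: the trace-zero `n × n` matrices over `𝕜`, as an `𝔽_p`-submodule of the matrix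
algebra. -/
noncomputable def M0 : Submodule (ZMod p) (Matrix (Fin n) (Fin n) 𝕜) :=
  LinearMap.ker (Matrix.traceLinearMap (Fin n) (ZMod p) 𝕜)

namespace TraceZeroEnd

open Matrix

variable {n : ℕ} {K : Type} [Field K]

/-- A map on matrices that restricts to an additive map from trace-zero matrices to trace-zero
matrices commuting with conjugation by transvections; its values elsewhere are arbitrary. -/
structure IsTransvectionEquivariant (Φ : Matrix (Fin n) (Fin n) K → Matrix (Fin n) (Fin n) K) :
    Prop where
  map_add : ∀ A B, trace A = 0 → trace B = 0 → Φ (A + B) = Φ A + Φ B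
  map_conj : ∀ i j, i ≠ j → ∀ s A, trace A = 0 →
    Φ (transvection i j s * A * transvection i j (-s)) =
      transvection i j s * Φ A * transvection i j (-s)
  map_trace : ∀ A, trace A = 0 → trace (Φ A) = 0

/-- The matrix `y (E_ii - E_jj)`. -/
def diagPair (i j : Fin n) (y : K) : Matrix (Fin n) (Fin n) K := single i i y - single j j y

lemma trace_diagPair (i j : Fin n) (y : K) : trace (diagPair i j y) = 0 := by
  simp [diagPair]

lemma transvection_mul_neg {i j : Fin n} (h : i ≠ j) (s : K) :
    transvection i j s * transvection i j (-s) = 1 := by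
  rw [transvection_mul_transvection_same i j h]; simp

/-- The matrix `single i j x` is fixed by transvections along `E_kl` with `l ≠ i`, `k ≠ j`. -/
lemma conj_single_fixed {i j k l : Fin n} (hli : l ≠ i) (hkj : k ≠ j) (s x : K) :
    transvection k l s * single i j x * transvection k l (-s) = single i j x := by
  simp [transvection, mul_add, add_mul, single_mul_single_of_ne, hli, hkj.symm]

lemma conj_single_row {i j k : Fin n} (hik : i ≠ k) (s x : K) :
    transvection j k s * single i j x * transvection j k (-s) =
      single i j x - single i k (s * x) := by
  simp [transvection, mul_add, add_mul, single_mul_single_of_ne, hik.symm, single_neg,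
    sub_eq_add_neg, mul_comm]

lemma conj_single_opp (i j : Fin n) (s x : K) :
    transvection j i s * single i j x * transvection j i (-s) =
      single i j x - diagPair i j (s * x) - single j i (s ^ 2 * x) := by
  have h1 : s * x * s = s ^ 2 * x := by ring
  have h2 : x * s = s * x := mul_comm _ _
  simp [transvection, mul_add, add_mul, diagPair, h1, h2, single_neg, sub_eq_add_neg]
  abel

lemma conj_smul_one {i j : Fin n} (h : i ≠ j) (s a : K) :
    transvection i j s * (a • (1 : Matrix (Fin n) (Fin n) K)) * transvection i j (-s) = a • 1 := by
  rw [mul_smul_comm, smul_mul_assoc, mul_one, transvection_mul_neg h]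

namespace IsTransvectionEquivariant

variable {Φ : Matrix (Fin n) (Fin n) K → Matrix (Fin n) (Fin n) K}

lemma map_zero (H : IsTransvectionEquivariant Φ) : Φ 0 = 0 := by
  have := H.map_add 0 0 (by simp) (by simp)
  simpa using this

lemma map_sub (H : IsTransvectionEquivariant Φ) {A B : Matrix (Fin n) (Fin n) K}
    (hA : trace A = 0) (hB : trace B = 0) : Φ (A - B) = Φ A - Φ B := by
  have := H.map_add (A - B) B (by simp [hA, hB]) hB
  rw [sub_add_cancel] at this
  rw [this, add_sub_cancel_right]

lemma map_neg (H : IsTransvectionEquivariant Φ) {A : Matrix (Fin n) (Fin n) K}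
    (hA : trace A = 0) : Φ (-A) = -Φ A := by
  have := H.map_sub (A := 0) (by simp) hA
  simpa [H.map_zero] using this

lemma map_sum (H : IsTransvectionEquivariant Φ) {ι : Type} (t : Finset ι)
    (F : ι → Matrix (Fin n) (Fin n) K) (hF : ∀ a, trace (F a) = 0) :
    Φ (∑ a ∈ t, F a) = ∑ a ∈ t, Φ (F a) := by
  classical
  induction t using Finset.induction_on with
  | empty => simpa using H.map_zero
  | insert a t ha ih =>
    rw [Finset.sum_insert ha, Finset.sum_insert ha, H.map_add _ _ (hF a), ih]
    simp [trace_sum, hF]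

/-- The image of `x E_ij` commutes with the elementary matrices whose transvections fix it. -/
lemma commute_single (H : IsTransvectionEquivariant Φ) {i j k l : Fin n} (hij : i ≠ j)
    (hkl : k ≠ l) (hli : l ≠ i) (hkj : k ≠ j) (x : K) :
    Commute (single k l 1) (Φ (single i j x)) := by
  have h := H.map_conj k l hkl 1 (single i j x) (trace_single_eq_of_ne _ _ _ hij)
  rw [conj_single_fixed hli hkj] at h
  have h' := congrArg (· * transvection k l (1 : K)) h
  rw [mul_assoc, transvection_mul_transvection_same k l hkl] at h'
  simp [transvection, mul_add, add_mul] at h'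
  exact h'.symm

/-- The image of `x E_ij` is a combination of the identity and `E_ij`; the coefficients are read
off from the entries `(i, i)` and `(i, j)`. -/
lemma map_single_eq (H : IsTransvectionEquivariant Φ) {i j : Fin n} (hij : i ≠ j) (x : K) :
    Φ (single i j x) = Φ (single i j x) i i • 1 + single i j (Φ (single i j x) i j) := by
  set B := Φ (single i j x) with hB
  have hcol : ∀ k, k ≠ j → Commute (single k j 1) B := fun k hk =>
    H.commute_single hij hk hij.symm hk x
  have hrow : ∀ l, l ≠ i → Commute (single i l 1) B := fun l hl =>
    H.commute_single hij hl.symm hl hij x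
  have hdiag : ∀ k, B k k = B i i := by
    intro k
    by_cases hk : k = i
    · rw [hk]
    · exact (diag_eq_of_commute_single (hrow k hk)).symm
  ext a b
  by_cases hab : a = b
  · subst hab
    have : ¬ (i = a ∧ j = a) := fun h => hij (h.1.trans h.2.symm)
    simp [hdiag a, this]
  · by_cases hb : b = j
    · subst hb
      by_cases ha : a = i
      · subst ha; simp [hab]
      · have : B a b = 0 := row_eq_zero_of_commute_single (hrow a ha) (Ne.symm hab)
        simp [this, hab, Ne.symm ha]
    · have : B a b = 0 := col_eq_zero_of_commute_single (hcol b hb) hab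
      simp [this, hab, Ne.symm hb]

/-- With a third index available, the image of `x E_ik` has no scalar part, and its coefficient is
homogeneous and independent of the column. -/
lemma row_relation (H : IsTransvectionEquivariant Φ) {i j k : Fin n} (hij : i ≠ j) (hik : i ≠ k)
    (hjk : j ≠ k) (s x : K) :
    Φ (single i k (s * x)) = single i k (s * Φ (single i j x) i j) := by
  have h := H.map_conj j k hjk s (single i j x) (trace_single_eq_of_ne _ _ _ hij)
  rw [conj_single_row hik, H.map_sub (trace_single_eq_of_ne _ _ _ hij)
    (trace_single_eq_of_ne _ _ _ hik), H.map_single_eq hij x, mul_add, add_mul,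
    conj_smul_one hjk, conj_single_row hik, add_sub_assoc, add_right_inj, sub_right_inj] at h
  simpa [hij] using h

/-- The image of `s x (E_ii - E_jj)`, obtained by conjugating `x E_ij` by `1 + s E_ji`. -/
lemma map_diagPair (H : IsTransvectionEquivariant Φ) {i j : Fin n} (hij : i ≠ j) (s x : K) :
    Φ (diagPair i j (s * x)) = diagPair i j (s * Φ (single i j x) i j)
      + single j i (s ^ 2 * Φ (single i j x) i j) - Φ (single j i (s ^ 2 * x)) := by
  have t1 : trace (single i j x) = 0 := trace_single_eq_of_ne _ _ _ hij
  have t2 : trace (single j i (s ^ 2 * x)) = 0 := trace_single_eq_of_ne _ _ _ hij.symm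
  have t3 := trace_diagPair i j (s * x)
  have h := H.map_conj j i hij.symm s (single i j x) t1
  rw [conj_single_opp, H.map_sub (by simp [t1, t3]) t2, H.map_sub t1 t3] at h
  have h' : transvection j i s * Φ (single i j x) * transvection j i (-s) =
      Φ (single i j x) - diagPair i j (s * Φ (single i j x) i j)
        - single j i (s ^ 2 * Φ (single i j x) i j) := by
    conv_lhs => rw [H.map_single_eq hij x, mul_add, add_mul, conj_smul_one hij.symm,
      conj_single_opp]
    conv_rhs => rw [H.map_single_eq hij x]
    simp [hij]
    abel
  rw [h'] at h
  have e : Φ (diagPair i j (s * x)) = Φ (single i j x) - Φ (single j i (s ^ 2 * x))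
      - (Φ (single i j x) - Φ (diagPair i j (s * x)) - Φ (single j i (s ^ 2 * x))) := by abel
  rw [e, h]
  abel

/-- Comparison of the two formulas for `Φ (s x (E_ii - E_jj))`, at the entry `(j, i)`. -/
lemma coeff_sq (H : IsTransvectionEquivariant Φ) {i j : Fin n} (hij : i ≠ j) (s x : K) :
    Φ (single j i (s ^ 2 * x)) j i = s ^ 2 * Φ (single i j x) i j := by
  have h1 := congrFun (congrFun (H.map_diagPair hij s x) j) i
  have h2 := congrFun (congrFun (H.map_diagPair hij.symm s x) j) i
  have e : diagPair j i (s * x) = -diagPair i j (s * x) := by simp [diagPair]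
  rw [e, H.map_neg (trace_diagPair _ _ _), H.map_single_eq hij (s ^ 2 * x)] at h2
  rw [Matrix.neg_apply, h1] at h2
  simp [diagPair, hij, hij.symm] at h2
  linear_combination h2

lemma coeff_symm (H : IsTransvectionEquivariant Φ) {i j : Fin n} (hij : i ≠ j) (x : K) :
    Φ (single j i x) j i = Φ (single i j x) i j := by
  simpa using H.coeff_sq hij 1 x

/-- The image of `s x (E_ii - E_jj)` depends on `s x` only; the entries `(i, i)` and `(j, j)`. -/
lemma diag_relations (H : IsTransvectionEquivariant Φ) {i j : Fin n} (hij : i ≠ j) (s x : K) :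
    s * Φ (single i j x) i j - Φ (single j i (s ^ 2 * x)) j j =
        Φ (single i j (s * x)) i j - Φ (single j i (s * x)) j j ∧
      s * Φ (single i j x) i j + Φ (single j i (s ^ 2 * x)) j j =
        Φ (single i j (s * x)) i j + Φ (single j i (s * x)) j j := by
  have h1 := H.map_diagPair hij s x
  have h2 := H.map_diagPair hij 1 (s * x)
  simp only [one_pow, one_mul] at h2
  rw [h1, H.map_single_eq hij.symm (s ^ 2 * x)] at h2
  rw [H.map_single_eq hij.symm (s * x)] at h2
  have hi := congrFun (congrFun h2 i) i
  have hj := congrFun (congrFun h2 j) j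
  simp [diagPair, hij, hij.symm] at hi hj
  exact ⟨hi, by linear_combination -hj⟩

lemma trace_relation (H : IsTransvectionEquivariant Φ) {i j : Fin n} (hij : i ≠ j) (x : K) :
    (n : K) * Φ (single i j x) i i = 0 := by
  have h := H.map_trace _ (trace_single_eq_of_ne i j x hij)
  rw [H.map_single_eq hij x, trace_add, trace_single_eq_of_ne _ _ _ hij] at h
  simpa [mul_comm] using h

/-- The image of `x E_ij` is `x c E_ij`, with `c` independent of `x`. -/
lemma map_single_linear [Fintype K] (H : IsTransvectionEquivariant Φ)
    (h2 : n = 2 → Fintype.card K ≠ 2) {i j : Fin n} (hij : i ≠ j) (x : K) :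
    Φ (single i j x) = single i j (x * Φ (single i j 1) i j) := by
  by_cases hk : ∃ k, i ≠ k ∧ k ≠ j
  · obtain ⟨k, hik, hkj⟩ := hk
    have h1 := H.row_relation hik hij hkj x 1
    have h0 := H.row_relation hik hij hkj 1 1
    simp only [mul_one, one_mul] at h1 h0
    rw [h1, h0]
    simp
  · push Not at hk
    have hn : n = 2 := by
      have hu : (Finset.univ : Finset (Fin n)) = {i, j} := by
        ext k
        by_cases h : i = k
        · simp [h]
        · simp [hk k h]
      have := congrArg Finset.card hu
      rwa [Finset.card_univ, Fintype.card_fin, Finset.card_pair hij] at this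
    suffices hs : ∀ i j : Fin n, i ≠ j → (∀ x, Φ (single i j x) i i = 0) ∧
        ∀ s x, Φ (single i j (s * x)) i j = s * Φ (single i j x) i j by
      obtain ⟨ha, hc⟩ := hs i j hij
      have := hc x 1
      rw [mul_one] at this
      rw [H.map_single_eq hij x, ha, this]
      simp
    by_cases hp : (2 : K) = 0
    · have hchar : CharP K 2 := CharTwo.of_one_ne_zero_of_two_eq_zero one_ne_zero hp
      intro i j hij
      have hc : ∀ i j : Fin n, i ≠ j → ∀ s x,
          Φ (single i j (s * x)) i j = s * Φ (single i j x) i j := by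
        intro i j hij s x
        obtain ⟨r, hr⟩ := FiniteField.isSquare_of_char_two (ringChar.eq K 2) s
        rw [hr, ← sq, ← H.coeff_symm hij x]
        exact H.coeff_sq hij.symm r x
      refine ⟨fun x => ?_, hc i j hij⟩
      have hinv : ∀ s y, s ≠ 0 → Φ (single i j (s * y)) i i = Φ (single i j y) i i := by
        intro s y hs
        have h := (H.diag_relations hij.symm s (s⁻¹ * y)).1
        rw [hc j i hij.symm s, sub_right_inj] at h
        have e1 : s ^ 2 * (s⁻¹ * y) = s * y := by field_simp
        have e2 : s * (s⁻¹ * y) = y := by field_simp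
        rwa [e1, e2] at h
      obtain ⟨s, hs0, hs1⟩ : ∃ s : K, s ≠ 0 ∧ s ≠ 1 := by
        by_contra! hcon
        apply h2 hn
        classical
        have hu : (Finset.univ : Finset K) = {0, 1} := by
          ext s
          by_cases h : s = 0
          · simp [h]
          · simp [hcon s h]
        rw [← Finset.card_univ, hu, Finset.card_pair zero_ne_one]
      -- `x = s y - y` for `y = (s - 1)⁻¹ x`, and the scalar part agrees at `s y` and `y`.
      have hs1' : s - 1 ≠ 0 := sub_ne_zero.2 hs1
      have hx : single i j x = single i j (s * ((s - 1)⁻¹ * x)) - single i j ((s - 1)⁻¹ * x) := by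
        rw [sub_eq_add_neg, single_neg, ← single_add]
        congr 1
        field_simp
        ring
      rw [hx, H.map_sub (trace_single_eq_of_ne _ _ _ hij) (trace_single_eq_of_ne _ _ _ hij),
        Matrix.sub_apply, hinv s _ hs0, sub_self]
    · have ha : ∀ i j : Fin n, i ≠ j → ∀ x, Φ (single i j x) i i = 0 := by
        intro i j hij x
        have h := H.trace_relation hij x
        have hcast : (n : K) = 2 := by rw [hn]; norm_num
        rw [hcast] at h
        exact (mul_eq_zero.1 h).resolve_left hp
      intro i j hij
      refine ⟨ha i j hij, fun s x => ?_⟩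
      have h := (H.diag_relations hij s x).1
      rw [ha j i hij.symm, ha j i hij.symm, sub_zero, sub_zero] at h
      exact h.symm

/-- The scalar by which `Φ` acts on `E_ij` does not depend on `(i, j)`. -/
lemma coeff_const (H : IsTransvectionEquivariant Φ) {i j k l : Fin n} (hij : i ≠ j) (hkl : k ≠ l) :
    Φ (single i j 1) i j = Φ (single k l 1) k l := by
  have hrow : ∀ a b c : Fin n, a ≠ b → a ≠ c →
      Φ (single a b 1) a b = Φ (single a c 1) a c := by
    intro a b c hab hac
    by_cases hbc : b = c
    · rw [hbc]
    · have h := H.row_relation hab hac hbc 1 1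
      simp only [mul_one, one_mul] at h
      rw [h]
      simp
  by_cases hik : i = k
  · subst hik
    exact hrow i j l hij hkl
  · rw [hrow i j k hij hik, ← H.coeff_symm hik, hrow k i l (Ne.symm hik) hkl]

theorem eq_smul [Fintype K] (H : IsTransvectionEquivariant Φ) (hn : 2 ≤ n)
    (h2 : n = 2 → Fintype.card K ≠ 2) :
    ∃ c : K, ∀ A, trace A = 0 → Φ A = c • A := by
  let o : Fin n := ⟨0, by omega⟩
  let u : Fin n := ⟨1, by omega⟩
  have hou : o ≠ u := by simp [o, u]
  refine ⟨Φ (single o u 1) o u, ?_⟩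
  set c := Φ (single o u 1) o u
  have hs : ∀ i j : Fin n, i ≠ j → ∀ x, Φ (single i j x) = c • single i j x := by
    intro i j hij x
    rw [H.map_single_linear h2 hij x, H.coeff_const hij hou, smul_single, smul_eq_mul, mul_comm]
  have hd : ∀ i j : Fin n, ∀ x, Φ (diagPair i j x) = c • diagPair i j x := by
    intro i j x
    by_cases hij : i = j
    · subst hij
      simp [diagPair, H.map_zero]
    · have h := H.map_diagPair hij 1 x
      simp only [one_pow, one_mul] at h
      rw [h, hs i j hij, hs j i (Ne.symm hij)]
      simp [diagPair, smul_sub]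
  intro A hA
  -- `F i j` is `A_ij E_ij` off the diagonal and `A_ii (E_ii - E_oo)` on it.
  let F : Fin n → Fin n → Matrix (Fin n) (Fin n) K := fun i j =>
    if i = j then diagPair i o (A i i) else single i j (A i j)
  have hFt : ∀ i j, trace (F i j) = 0 := by
    intro i j
    by_cases hij : i = j
    · simp [F, hij, trace_diagPair]
    · simp [F, hij]
  have hF : ∀ i j, Φ (F i j) = c • F i j := by
    intro i j
    by_cases hij : i = j
    · simp [F, hij, hd]
    · simp [F, hij, hs]
  have hsum : A = ∑ i, ∑ j, F i j := by
    have h1 : ∀ i j, F i j = single i j (A i j) - if i = j then single o o (A i i) else 0 := by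
      intro i j
      by_cases hij : i = j
      · subst hij; simp [F, diagPair]
      · simp [F, hij]
    have h3 : ∑ i, single o o (A i i) = (0 : Matrix (Fin n) (Fin n) K) := by
      have := _root_.map_sum (singleAddMonoidHom o o : K →+ Matrix (Fin n) (Fin n) K)
        (fun i => A i i) Finset.univ
      simp only [singleAddMonoidHom_apply] at this
      rw [← this]
      have hA' : ∑ i, A i i = 0 := hA
      rw [hA', single_zero]
    simp only [h1, Finset.sum_sub_distrib, Finset.sum_ite_eq, Finset.mem_univ, if_true, h3,
      sub_zero]
    exact matrix_eq_sum_single A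
  rw [hsum, H.map_sum _ _ (fun i => by simp [trace_sum, hFt]), Finset.smul_sum]
  refine Finset.sum_congr rfl fun i _ => ?_
  rw [H.map_sum _ _ (hFt i), Finset.smul_sum]
  exact Finset.sum_congr rfl fun j _ => hF i j

end IsTransvectionEquivariant

end TraceZeroEnd

/-- Let `𝕜` be a finite field of characteristic `p` and `n ≥ 2`, with `𝕜 ≠ 𝔽₂` if `n = 2`.
Any endomorphism `φ` of the `𝔽_p[SL_n(𝕜)]`-module `M₀(𝕜)` of trace-zero matrices (with `SL_n(𝕜)`
acting by conjugation) is multiplication by a scalar `c ∈ 𝕜`. -/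
theorem endomorphism_of_trace_zero_matrices_is_scalar
    (hn : 2 ≤ n) (h2 : n = 2 → Fintype.card 𝕜 ≠ 2)
    (φ : M0 p n 𝕜 →ₗ[ZMod p] Matrix (Fin n) (Fin n) 𝕜)
    (hφtr : ∀ A : M0 p n 𝕜, Matrix.trace (φ A) = 0)
    (hφconj : ∀ (g : Matrix.SpecialLinearGroup (Fin n) 𝕜) (A : M0 p n 𝕜)
      (h : (g : Matrix (Fin n) (Fin n) 𝕜) * (A : Matrix (Fin n) (Fin n) 𝕜) *
        ((g⁻¹ : Matrix.SpecialLinearGroup (Fin n) 𝕜) : Matrix (Fin n) (Fin n) 𝕜) ∈ M0 p n 𝕜),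
      φ ⟨_, h⟩ = (g : Matrix (Fin n) (Fin n) 𝕜) * (φ A) *
        ((g⁻¹ : Matrix.SpecialLinearGroup (Fin n) 𝕜) : Matrix (Fin n) (Fin n) 𝕜)) :
    ∃ c : 𝕜, ∀ A : M0 p n 𝕜, φ A = c • (A : Matrix (Fin n) (Fin n) 𝕜) := by
  classical
  have hmem : ∀ A : Matrix (Fin n) (Fin n) 𝕜, A ∈ M0 p n 𝕜 ↔ Matrix.trace A = 0 := fun A => by
    simp [M0]
  let Φ : Matrix (Fin n) (Fin n) 𝕜 → Matrix (Fin n) (Fin n) 𝕜 := fun A =>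
    if h : A ∈ M0 p n 𝕜 then φ ⟨A, h⟩ else 0
  have hΦ : ∀ A (h : A ∈ M0 p n 𝕜), Φ A = φ ⟨A, h⟩ := fun A h => dif_pos h
  have H : TraceZeroEnd.IsTransvectionEquivariant Φ := by
    refine ⟨fun A B hA hB => ?_, fun i j hij s A hA => ?_, fun A hA => ?_⟩
    · have hA' := (hmem A).2 hA
      have hB' := (hmem B).2 hB
      rw [hΦ A hA', hΦ B hB', hΦ _ (add_mem hA' hB'), ← map_add]
      rfl
    · let g : Matrix.SpecialLinearGroup (Fin n) 𝕜 :=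
        ⟨Matrix.transvection i j s, Matrix.det_transvection_of_ne i j hij s⟩
      let g' : Matrix.SpecialLinearGroup (Fin n) 𝕜 :=
        ⟨Matrix.transvection i j (-s), Matrix.det_transvection_of_ne i j hij (-s)⟩
      have hg : g⁻¹ = g' := inv_eq_of_mul_eq_one_right
        (Subtype.ext (TraceZeroEnd.transvection_mul_neg hij s))
      have hA' := (hmem A).2 hA
      have hc : Matrix.transvection i j s * A * Matrix.transvection i j (-s) ∈ M0 p n 𝕜 := by
        have h := TraceZeroEnd.transvection_mul_neg hij (-s)
        rw [neg_neg] at h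
        rw [hmem, Matrix.trace_mul_comm, ← mul_assoc, h, one_mul, hA]
      have key := hφconj g ⟨A, hA'⟩
      rw [hg] at key
      rw [hΦ _ hc, hΦ _ hA']
      exact key hc
    · rw [hΦ A ((hmem A).2 hA)]
      exact hφtr _
  obtain ⟨c, hc⟩ := H.eq_smul hn h2
  refine ⟨c, fun A => ?_⟩
  rw [← hc A ((hmem _).1 A.2), hΦ _ A.2]

end
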